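/- Let n ≥ 3 and let D be a semisimple x-monotone drawing of K_n. Then for every integer k satisfying 0 ≤ k < n/2 − 1, the number of ≤≤k-edges satisfies E_{≤≤k}(D) ≥ 3·C(k+3, 3). -/

import Mathlib

/-- `Zval n` is Hill's conjectured value
`Z(n) = (1/4)⌊n/2⌋⌊(n−1)/2⌋⌊(n−2)/2⌋⌊(n−3)/2⌋` for the crossing number of `K n`.
(The product of the four floors is always divisible by 4, so natural division is exact.) -/
def Zval (n : ℕ) : ℕ :=
  n / 2 * ((n - 1) / 2) * ((n - 2) / 2) * ((n - 3) / 2) / 4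

/-- An x-monotone drawing of the complete graph `K n`: vertices `v i = (x i, 0)` with
`x` strictly increasing, and for each pair `i < j` a continuous function `e i j` on
`[x i, x j]` vanishing at the endpoints, whose graph is the arc of the edge `{i, j}`.
Edges avoid the intermediate vertices, any two distinct edges meet in finitely many
interior parameters, and at each such common point the difference changes sign
(a proper crossing). -/
structure XMonotoneDrawing (n : ℕ) where
  x : Fin n → ℝ
  x_strictMono : StrictMono x
  e : Fin n → Fin n → ℝ → ℝ
  cont : ∀ i j : Fin n, i < j → ContinuousOn (e i j) (Set.Icc (x i) (x j))
  end_left : ∀ i j : Fin n, i < j → e i j (x i) = 0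
  end_right : ∀ i j : Fin n, i < j → e i j (x j) = 0
  avoid_vertex : ∀ i m j : Fin n, i < m → m < j → e i j (x m) ≠ 0
  cross_finite : ∀ i j k l : Fin n, i < j → k < l → (i, j) ≠ (k, l) →
    {t : ℝ | max (x i) (x k) < t ∧ t < min (x j) (x l) ∧ e i j t = e k l t}.Finite
  sign_change : ∀ i j k l : Fin n, i < j → k < l → (i, j) ≠ (k, l) →
    ∀ t : ℝ, max (x i) (x k) < t → t < min (x j) (x l) → e i j t = e k l t →
      ∃ ε > (0 : ℝ), ∀ s : ℝ, max (x i) (x k) < s → t - ε < s → s < t →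
        ∀ u : ℝ, u < min (x j) (x l) → t < u → u < t + ε →
          (e i j s - e k l s) * (e i j u - e k l u) < 0

namespace XMonotoneDrawing

variable {n : ℕ}

/-- The set of parameters at which the edges `{i,j}` and `{k,l}` cross
(both edges are parametrized over the `x`-axis). -/
def crossSet (D : XMonotoneDrawing n) (i j k l : Fin n) : Set ℝ :=
  {t : ℝ | max (D.x i) (D.x k) < t ∧ t < min (D.x j) (D.x l) ∧ D.e i j t = D.e k l t}

/-- The number of crossings between the edges `{i,j}` and `{k,l}`. -/
noncomputable def crossCount (D : XMonotoneDrawing n) (i j k l : Fin n) : ℕ :=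
  (D.crossSet i j k l).ncard

/-- Two edges `{i,j}` and `{k,l}` are adjacent if they share an endpoint index. -/
def Adj (i j k l : Fin n) : Prop := i = k ∨ i = l ∨ j = k ∨ j = l

/-- A drawing is semisimple if no two adjacent edges cross. -/
def Semisimple (D : XMonotoneDrawing n) : Prop :=
  ∀ i j k l : Fin n, i < j → k < l → (i, j) ≠ (k, l) → Adj i j k l →
    D.crossCount i j k l = 0

/-- A drawing is weakly semisimple if every two adjacent edges cross an even
number of times. -/
def WeaklySemisimple (D : XMonotoneDrawing n) : Prop :=
  ∀ i j k l : Fin n, i < j → k < l → (i, j) ≠ (k, l) → Adj i j k l →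
    Even (D.crossCount i j k l)

/-- A drawing is simple if no two adjacent edges cross and every two non-adjacent
edges cross at most once. -/
def Simple (D : XMonotoneDrawing n) : Prop :=
  ∀ i j k l : Fin n, i < j → k < l → (i, j) ≠ (k, l) →
    (Adj i j k l → D.crossCount i j k l = 0) ∧
    (¬ Adj i j k l → D.crossCount i j k l ≤ 1)

/-- `cr D`: the total number of crossings of `D`. (Each unordered pair of distinct
edges is counted twice in the sum, whence the division by 2; `crossCount` is
symmetric in the two edges.) -/
noncomputable def cr (D : XMonotoneDrawing n) : ℕ :=
  (∑ p : (Fin n × Fin n) × (Fin n × Fin n),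
      if p.1.1 < p.1.2 ∧ p.2.1 < p.2.2 ∧ p.1 ≠ p.2 then
        D.crossCount p.1.1 p.1.2 p.2.1 p.2.2
      else 0) / 2

/-- `ocr D`: the number of unordered pairs of edges of `D` crossing an odd number
of times. (Each unordered pair appears twice as an ordered pair.) -/
noncomputable def ocr (D : XMonotoneDrawing n) : ℕ :=
  {p : (Fin n × Fin n) × (Fin n × Fin n) |
    p.1.1 < p.1.2 ∧ p.2.1 < p.2.2 ∧ p.1 ≠ p.2 ∧
      Odd (D.crossCount p.1.1 p.1.2 p.2.1 p.2.2)}.ncard / 2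

/-- The signature of the triple `i < j < k`: `true` (i.e. `+`) if the vertex `v j`
lies below the edge `{i, k}`, i.e. `e i k (x j) > 0`, and `false` (i.e. `−`) otherwise. -/
noncomputable def sig (D : XMonotoneDrawing n) (i j k : Fin n) : Bool :=
  if 0 < D.e i k (D.x j) then true else false

/-- `D` realizes the signature function `σ` if `σ_D` and `σ` agree on all
increasing triples. -/
def Realizes (D : XMonotoneDrawing n) (σ : Fin n → Fin n → Fin n → Bool) : Prop :=
  ∀ i j k : Fin n, i < j → j < k → D.sig i j k = σ i j k

/-- A drawing is pseudolinear if its edges extend to continuous curves over all of `ℝ`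
that avoid all vertices other than their endpoints and such that any two of these
extended curves cross exactly once (the crossing being a sign change of the difference). -/
def Pseudolinear (D : XMonotoneDrawing n) : Prop :=
  ∃ p : Fin n → Fin n → ℝ → ℝ,
    (∀ i j : Fin n, i < j → Continuous (p i j)) ∧
    (∀ i j : Fin n, i < j → ∀ t ∈ Set.Icc (D.x i) (D.x j), p i j t = D.e i j t) ∧
    (∀ i j m : Fin n, i < j → m ≠ i → m ≠ j → p i j (D.x m) ≠ 0) ∧
    (∀ i j k l : Fin n, i < j → k < l → (i, j) ≠ (k, l) →
      ∃ t : ℝ, p i j t = p k l t ∧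
        ∀ s u : ℝ, s < t → t < u →
          (p i j s - p k l s) * (p i j u - p k l u) < 0)

/-- The arc of the edge `{i, j}` as a subset of the plane `ℝ × ℝ`. -/
def edgeArc (D : XMonotoneDrawing n) (i j : Fin n) : Set (ℝ × ℝ) :=
  {q : ℝ × ℝ | D.x i ≤ q.1 ∧ q.1 ≤ D.x j ∧ q.2 = D.e i j q.1}

/-- The union of all edge arcs of the drawing. -/
def arcUnion (D : XMonotoneDrawing n) : Set (ℝ × ℝ) :=
  ⋃ i : Fin n, ⋃ j : Fin n, ⋃ (_ : i < j), D.edgeArc i j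

end XMonotoneDrawing

namespace Sig

variable {n : ℕ}

/-- With respect to a signature function `σ`, the vertex `m ∉ {i, j}` is on the left of
the directed edge `(i, j)` (where `i < j`). -/
def LeftOf (σ : Fin n → Fin n → Fin n → Bool) (i j m : Fin n) : Prop :=
  (i < m ∧ m < j ∧ σ i m j = false) ∨ (m < i ∧ σ m i j = true) ∨ (j < m ∧ σ i j m = true)

/-- The number of vertices on the left of the directed edge `(i, j)`. -/
noncomputable def leftCount (σ : Fin n → Fin n → Fin n → Bool) (i j : Fin n) : ℕ :=
  {m : Fin n | LeftOf σ i j m}.ncard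

/-- The edge `{i, j}` (with `i < j`) is a `k`-edge of `σ` if `min(ℓ, n − 2 − ℓ) = k`,
where `ℓ` is the number of vertices on its left. -/
def IsKEdge (σ : Fin n → Fin n → Fin n → Bool) (k : ℕ) (i j : Fin n) : Prop :=
  min (leftCount σ i j) (n - 2 - leftCount σ i j) = k

/-- `Ek σ k`: the number of `k`-edges of `σ`. -/
noncomputable def Ek (σ : Fin n → Fin n → Fin n → Bool) (k : ℕ) : ℕ :=
  {p : Fin n × Fin n | p.1 < p.2 ∧ IsKEdge σ k p.1 p.2}.ncard

/-- `Ele σ k = E_{≤k}(σ)`: the number of `≤k`-edges of `σ`. -/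
noncomputable def Ele (σ : Fin n → Fin n → Fin n → Bool) (k : ℕ) : ℕ :=
  ∑ i ∈ Finset.range (k + 1), Ek σ i

/-- `Elele σ k = E_{≤≤k}(σ) = Σ_{j=0}^{k} E_{≤j}(σ)`. -/
noncomputable def Elele (σ : Fin n → Fin n → Fin n → Bool) (k : ℕ) : ℕ :=
  ∑ j ∈ Finset.range (k + 1), Ele σ j

/-- `E_{≤≤k}` with an integer index, which vanishes for negative `k`. -/
noncomputable def ElelZ (σ : Fin n → Fin n → Fin n → Bool) (k : ℤ) : ℕ :=
  if 0 ≤ k then Elele σ k.toNat else 0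

/-- The left count of the edge `{i, j}` in the drawing restricted to the first
`n − 1` vertices (the last vertex deleted). -/
noncomputable def leftCountRes (σ : Fin n → Fin n → Fin n → Bool) (i j : Fin n) : ℕ :=
  {m : Fin n | LeftOf σ i j m ∧ (m : ℕ) + 1 < n}.ncard

/-- The edge `{i, j}` is a `k`-edge of the restriction of `σ` to the first `n − 1`
vertices (there `min(ℓ', (n−1) − 2 − ℓ') = k`). -/
def IsKEdgeRes (σ : Fin n → Fin n → Fin n → Bool) (k : ℕ) (i j : Fin n) : Prop :=
  min (leftCountRes σ i j) (n - 3 - leftCountRes σ i j) = k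

/-- The edge `{i, j}` is a `(D,D')`-invariant `≤k`-edge: it avoids the last vertex and
is an `m`-edge with `m ≤ k` both in `σ` and in the restriction of `σ` to the first
`n − 1` vertices. -/
def InvariantLeK (σ : Fin n → Fin n → Fin n → Bool) (k : ℕ) (i j : Fin n) : Prop :=
  (j : ℕ) + 1 < n ∧ (∃ m ≤ k, IsKEdge σ m i j) ∧ (∃ m ≤ k, IsKEdgeRes σ m i j)

/-- The ten 4-tuple forms allowed in signature functions of semisimple x-monotone
drawings: `++++, −−−−, ++−−, −−++, −++−, +−−+, −−−+, +++−, +−−−, −+++`. -/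
def AllowedForm (a b c d : Bool) : Prop :=
  (a, b, c, d) ∈ ([(true, true, true, true), (false, false, false, false),
    (true, true, false, false), (false, false, true, true),
    (false, true, true, false), (true, false, false, true),
    (false, false, false, true), (true, true, true, false),
    (true, false, false, false), (false, true, true, true)] :
      List (Bool × Bool × Bool × Bool))

/-- A signature function is admissible if every increasing 4-tuple is of one of the
ten allowed forms. -/
def Admissible (σ : Fin n → Fin n → Fin n → Bool) : Prop :=
  ∀ a b c d : Fin n, a < b → b < c → c < d →
    AllowedForm (σ a b c) (σ a b d) (σ a c d) (σ b c d)

/-- The six convex forms: `++++, −−−−, ++−−, −−++, −++−, +−−+`. -/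
def ConvexForm (a b c d : Bool) : Prop :=
  (a, b, c, d) ∈ ([(true, true, true, true), (false, false, false, false),
    (true, true, false, false), (false, false, true, true),
    (false, true, true, false), (true, false, false, true)] :
      List (Bool × Bool × Bool × Bool))

/-- The 4-tuple `a < b < c < d` is convex in `σ`. -/
def Convex4 (σ : Fin n → Fin n → Fin n → Bool) (a b c d : Fin n) : Prop :=
  ConvexForm (σ a b c) (σ a b d) (σ a c d) (σ b c d)

/-- The eight 4-tuple forms of pseudolinear x-monotone drawings (the sign-monotone
sequences): `++++, +++−, ++−−, +−−−, −−−−, −−−+, −−++, −+++`. -/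
def PLForm (a b c d : Bool) : Prop :=
  (a, b, c, d) ∈ ([(true, true, true, true), (true, true, true, false),
    (true, true, false, false), (true, false, false, false),
    (false, false, false, false), (false, false, false, true),
    (false, false, true, true), (false, true, true, true)] :
      List (Bool × Bool × Bool × Bool))

/-- The relation `j ⋖ k` on `{j : i < j}`: `j ⋖ k` iff (`j < k` and `σ i j k = +`)
or (`k < j` and `σ i k j = −`). -/
def Below (σ : Fin n → Fin n → Fin n → Bool) (i j k : Fin n) : Prop :=
  (j < k ∧ σ i j k = true) ∨ (k < j ∧ σ i k j = false)

end Sig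

open Finset

/-- A nowhere vanishing continuous function on a segment has the same sign at both ends. -/
theorem pos_left_iff_pos_right_of_ne_zero {d : ℝ → ℝ} {a b : ℝ} (hab : a ≤ b)
    (hd : ContinuousOn d (Set.Icc a b)) (h0 : ∀ t ∈ Set.Icc a b, d t ≠ 0) :
    0 < d a ↔ 0 < d b := by
  constructor
  · intro ha
    by_contra hb
    obtain ⟨t, ht, h⟩ := intermediate_value_Icc' hab hd ⟨not_lt.1 hb, ha.le⟩
    exact h0 t ht h
  · intro hb
    by_contra ha
    obtain ⟨t, ht, h⟩ := intermediate_value_Icc hab hd ⟨not_lt.1 ha, hb.le⟩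
    exact h0 t ht h

/-- Summing a function of the rank (the number of elements with a larger key) over a finite set
with injective keys amounts to summing over an initial segment of `ℕ`. -/
theorem sum_rank_eq_sum_range {ι : Type*} (f : ι → ℝ) (S : Finset ι)
    (hf : Set.InjOn f (S : Set ι)) (φ : ℕ → ℕ) :
    ∑ j ∈ S, φ (#{m ∈ S | f j < f m}) = ∑ r ∈ range #S, φ r := by
  classical
  induction S using Finset.induction_on_max_value f generalizing φ with
  | empty => simp
  | insert a S ha hmax ih =>
    have hlt : ∀ j ∈ S, f j < f a := fun j hj =>
      lt_of_le_of_ne (hmax j hj) fun h =>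
        ha (hf (by simp [hj]) (by simp) h ▸ hj)
    have htop : ({m ∈ insert a S | f a < f m} : Finset ι) = ∅ := by
      refine filter_eq_empty_iff.2 fun m hm => ?_
      rcases mem_insert.1 hm with rfl | hm
      · exact lt_irrefl _
      · exact not_lt.2 (hmax m hm)
    have hrest : ∀ j ∈ S, #{m ∈ insert a S | f j < f m} = #{m ∈ S | f j < f m} + 1 := by
      intro j hj
      rw [filter_insert, if_pos (hlt j hj), card_insert_of_notMem (by simp [ha])]
    rw [sum_insert ha, htop, card_insert_of_notMem ha, sum_range_succ', card_empty,
      sum_congr rfl fun j hj => by rw [hrest j hj],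
      ih (hf.mono (by simp)) fun r => φ (r + 1), add_comm]

/-- At least `min c #S` elements of a finite set with injective keys have rank less than `c`. -/
theorem min_le_card_rank_lt {ι : Type*} (f : ι → ℝ) (S : Finset ι)
    (hf : Set.InjOn f (S : Set ι)) (c : ℕ) :
    min c #S ≤ #{j ∈ S | #{m ∈ S | f j < f m} < c} := by
  rw [card_filter, sum_rank_eq_sum_range f S hf fun r => if r < c then 1 else 0, ← card_filter]
  calc min c #S = #(range (min c #S)) := (card_range _).symm
    _ ≤ _ := card_le_card fun r hr => by
      simp only [mem_range, mem_filter, lt_min_iff] at hr ⊢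
      omega

theorem sum_range_tsub_eq_choose (M c : ℕ) (h : c ≤ M) :
    ∑ r ∈ range M, (c - r) = (c + 1).choose 2 := by
  induction c generalizing M with
  | zero => simp
  | succ c ih =>
    obtain ⟨M, rfl⟩ : ∃ M', M = M' + 1 := ⟨M - 1, by omega⟩
    rw [sum_range_succ', sum_congr rfl fun r _ => Nat.add_sub_add_right c 1 r,
      ih M (by omega), Nat.choose_succ_succ' (c + 1) 1]
    simp [add_comm]

theorem two_mul_choose_le_sum_tsub_min (N K : ℕ) (h : 2 * K + 2 ≤ N) :
    2 * (K + 2).choose 2 ≤ ∑ r ∈ range N, (K + 1 - min r (N - 1 - r)) := by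
  have h1 := sum_range_tsub_eq_choose N (K + 1) (by omega)
  have h2 := sum_range_reflect (fun r => K + 1 - r) N
  calc 2 * (K + 2).choose 2
      = ∑ r ∈ range N, ((K + 1 - r) + (K + 1 - (N - 1 - r))) := by
        rw [sum_add_distrib, h2, h1, two_mul]
    _ ≤ _ := sum_le_sum fun r hr => by
        have := mem_range.1 hr
        omega

namespace Sig

/-- A signature is *keyed* if the right edges at every vertex, and likewise the left edges,
are linearly ordered from bottom to top by a real-valued key. -/
def Keyed {n : ℕ} (σ : Fin n → Fin n → Fin n → Bool) : Prop :=
  (∀ i, ∃ f : Fin n → ℝ, Set.InjOn f (Set.Ioi i) ∧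
    ∀ j m, i < j → i < m → (LeftOf σ i j m ↔ f j < f m)) ∧
  (∀ j, ∃ g : Fin n → ℝ, Set.InjOn g (Set.Iio j) ∧
    ∀ i m, i < j → m < j → (LeftOf σ i j m ↔ g i < g m))

/-- The signature induced on all vertices but the last one. -/
def deleteLast {N : ℕ} (σ : Fin (N + 1) → Fin (N + 1) → Fin (N + 1) → Bool) :
    Fin N → Fin N → Fin N → Bool :=
  fun i j m => σ i.castSucc j.castSucc m.castSucc

theorem Keyed.keyed_deleteLast {N : ℕ} {σ : Fin (N + 1) → Fin (N + 1) → Fin (N + 1) → Bool}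
    (h : Keyed σ) : Keyed (deleteLast σ) := by
  constructor
  · intro i
    obtain ⟨f, hf, hL⟩ := h.1 i.castSucc
    exact ⟨fun j => f j.castSucc,
      fun a ha b hb hab => Fin.castSucc_injective _ (hf ha hb hab),
      fun j m hj hm => hL j.castSucc m.castSucc hj hm⟩
  · intro j
    obtain ⟨g, hg, hL⟩ := h.2 j.castSucc
    exact ⟨fun i => g i.castSucc,
      fun a ha b hb hab => Fin.castSucc_injective _ (hg ha hb hab),
      fun i m hi hm => hL i.castSucc m.castSucc hi hm⟩

/-- The number `min(ℓ, n - 2 - ℓ)`, so that `{i, j}` is a `k`-edge iff it equals `k`. -/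
noncomputable def edgeType {n : ℕ} (σ : Fin n → Fin n → Fin n → Bool) (i j : Fin n) : ℕ :=
  min (leftCount σ i j) (n - 2 - leftCount σ i j)

/-- The sum of `K - type` (truncated at zero) over all edges. -/
noncomputable def weight {n : ℕ} (σ : Fin n → Fin n → Fin n → Bool) (K : ℕ) : ℕ :=
  ∑ j, ∑ i, if i < j then K - edgeType σ i j else 0

open scoped Classical in
theorem leftCount_eq_card {n : ℕ} (σ : Fin n → Fin n → Fin n → Bool) (i j : Fin n) :
    leftCount σ i j = #{m | LeftOf σ i j m} := by
  rw [leftCount, ← Set.ncard_coe_finset]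
  simp

open scoped Classical in
theorem leftCount_castSucc {N : ℕ} (σ : Fin (N + 1) → Fin (N + 1) → Fin (N + 1) → Bool)
    (i j : Fin N) :
    leftCount σ i.castSucc j.castSucc = leftCount (deleteLast σ) i j +
      if LeftOf σ i.castSucc j.castSucc (Fin.last N) then 1 else 0 := by
  simp only [leftCount_eq_card, card_filter, Fin.sum_univ_castSucc]
  rfl

theorem Ele_eq_card {n : ℕ} (σ : Fin n → Fin n → Fin n → Bool) (k : ℕ) :
    Ele σ k = ∑ p : Fin n × Fin n, if p.1 < p.2 ∧ edgeType σ p.1 p.2 ≤ k then 1 else 0 := by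
  classical
  have hE : ∀ r, Ek σ r =
      ∑ p : Fin n × Fin n, if p.1 < p.2 ∧ edgeType σ p.1 p.2 = r then 1 else 0 := by
    intro r
    rw [Ek, ← card_filter, ← Set.ncard_coe_finset]
    congr 1
    ext p
    simp only [mem_coe, mem_filter, mem_univ, true_and]
    rfl
  simp only [Ele, hE]
  rw [sum_comm]
  refine sum_congr rfl fun p _ => ?_
  by_cases hp : p.1 < p.2
  · simp [hp]
  · simp [hp]

theorem Elele_eq_weight {n : ℕ} (σ : Fin n → Fin n → Fin n → Bool) (k : ℕ) :
    Elele σ k = weight σ (k + 1) := by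
  simp only [Elele, Ele_eq_card, weight]
  rw [sum_comm, ← Fintype.sum_prod_type_right']
  refine sum_congr rfl fun p _ => ?_
  by_cases hp : p.1 < p.2
  · simp only [hp, true_and, if_true, ← card_filter]
    rw [← Nat.card_Ico]
    congr 1
    ext r
    simp only [mem_filter, mem_range, mem_Ico]
    omega
  · simp [hp]

/-- An edge avoiding the last vertex which is a `≤K`-edge on the same side before and after
the deletion of the last vertex. -/
def Stable {N : ℕ} (σ : Fin (N + 1) → Fin (N + 1) → Fin (N + 1) → Bool) (K : ℕ)
    (i j : Fin N) : Prop :=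
  (¬ LeftOf σ i.castSucc j.castSucc (Fin.last N) ∧ leftCount (deleteLast σ) i j ≤ K) ∨
  (LeftOf σ i.castSucc j.castSucc (Fin.last N) ∧ N - 2 - leftCount (deleteLast σ) i j ≤ K)

open scoped Classical in
theorem tsub_edgeType_castSucc_ge {N : ℕ}
    (σ : Fin (N + 1) → Fin (N + 1) → Fin (N + 1) → Bool) (K : ℕ) (hK : 2 * K + 2 ≤ N)
    (i j : Fin N) :
    K - edgeType (deleteLast σ) i j + (if Stable σ K i j then 1 else 0) ≤
      K + 1 - edgeType σ i.castSucc j.castSucc := by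
  simp only [edgeType, leftCount_castSucc, Stable]
  by_cases h : LeftOf σ i.castSucc j.castSucc (Fin.last N)
  · simp only [h, not_true_eq_false, false_and, true_and, false_or, if_true]
    split_ifs <;> omega
  · simp only [h, not_false_eq_true, false_and, true_and, or_false, if_false]
    split_ifs <;> omega

/-- The edges at the last vertex contribute at least `2 * (K + 2).choose 2`. -/
theorem Keyed.two_mul_choose_le_sum_last {N : ℕ}
    {σ : Fin (N + 1) → Fin (N + 1) → Fin (N + 1) → Bool} (h : Keyed σ) (K : ℕ)
    (hK : 2 * K + 2 ≤ N) :
    2 * (K + 2).choose 2 ≤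
      ∑ i : Fin N, (K + 1 - edgeType σ i.castSucc (Fin.last N)) := by
  classical
  obtain ⟨g, hg, hL⟩ := h.2 (Fin.last N)
  have hinj : Set.InjOn (fun i : Fin N => g i.castSucc) ((univ : Finset (Fin N)) : Set (Fin N)) :=
    fun a _ b _ hab => Fin.castSucc_injective _ (hg (Fin.castSucc_lt_last a)
      (Fin.castSucc_lt_last b) hab)
  have hcount : ∀ i : Fin N, leftCount σ i.castSucc (Fin.last N) =
      #{m : Fin N | g i.castSucc < g m.castSucc} := by
    intro i
    have hlast : ¬ LeftOf σ i.castSucc (Fin.last N) (Fin.last N) := by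
      simp [LeftOf, not_lt.2 (Fin.le_last i.castSucc)]
    rw [leftCount_eq_card, card_filter, card_filter, Fin.sum_univ_castSucc, if_neg hlast, add_zero]
    exact sum_congr rfl fun m _ => by
      simp only [hL i.castSucc m.castSucc (Fin.castSucc_lt_last i) (Fin.castSucc_lt_last m)]
  have hsum := sum_rank_eq_sum_range (fun i : Fin N => g i.castSucc) univ hinj
    fun r => K + 1 - min r (N - 1 - r)
  rw [card_univ, Fintype.card_fin] at hsum
  refine (two_mul_choose_le_sum_tsub_min N K hK).trans (hsum.symm.le.trans (le_of_eq ?_))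
  refine sum_congr rfl fun i _ => ?_
  rw [edgeType, hcount]
  rfl

open scoped Classical in
/-- At least `K + 1 - i` stable edges have `i` as their left endpoint. -/
theorem Keyed.le_card_stable {N : ℕ}
    {σ : Fin (N + 1) → Fin (N + 1) → Fin (N + 1) → Bool} (h : Keyed σ) (K : ℕ)
    (hK : 2 * K + 2 ≤ N) (i : Fin N) :
    K + 1 - (i : ℕ) ≤ #{j : Fin N | i < j ∧ Stable σ K i j} := by
  obtain ⟨F, hF, hL⟩ := h.1 i.castSucc
  set f : Fin N → ℝ := fun j => F j.castSucc with hf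
  set c := F (Fin.last N) with hc
  have hinj : Set.InjOn f (Set.Ioi i) := fun a ha b hb hab =>
    Fin.castSucc_injective _ (hF ha hb hab)
  have hne : ∀ j, i < j → f j ≠ c := fun j hj hjc =>
    (Fin.castSucc_lt_last j).ne (hF (show i.castSucc < j.castSucc from hj)
      (Fin.castSucc_lt_last i) hjc)
  have hlast : ∀ j, i < j → (LeftOf σ i.castSucc j.castSucc (Fin.last N) ↔ f j < c) :=
    fun j hj => hL _ _ hj (Fin.castSucc_lt_last i)
  have hleft : ∀ j m, i < j → i < m → (LeftOf (deleteLast σ) i j m ↔ f j < f m) :=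
    fun j m hj hm => hL j.castSucc m.castSucc hj hm
  set A : Finset (Fin N) := {j | i < j ∧ c < f j} with hA
  set B : Finset (Fin N) := {j | i < j ∧ f j < c} with hB
  have hAB : #A + #B = N - 1 - i := by
    rw [← card_union_of_disjoint, ← Fin.card_Ioi]
    · congr 1
      ext j
      simp only [hA, hB, mem_union, mem_filter, mem_univ, true_and, mem_Ioi]
      constructor
      · rintro (h | h) <;> exact h.1
      · intro hj
        rcases lt_or_gt_of_ne (hne j hj) with h | h
        · exact Or.inr ⟨hj, h⟩
        · exact Or.inl ⟨hj, h⟩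
    · rw [disjoint_left]
      intro j h1 h2
      simp only [hA, hB, mem_filter, mem_univ, true_and] at h1 h2
      exact lt_asymm h1.2 h2.2
  have hrankA := min_le_card_rank_lt f A
    (hinj.mono fun j hj => by simp [hA] at hj; exact hj.1) (K + 1 - i)
  have hrankB := min_le_card_rank_lt (fun j => - f j) B
    (fun a ha b hb hab => by
      simp only [hB, coe_filter, mem_univ, true_and, Set.mem_ofPred_eq] at ha hb
      exact hinj ha.1 hb.1 (neg_injective hab)) (K + 1 - i)
  have hstA : ∀ j ∈ A, #{m ∈ A | f j < f m} < K + 1 - i → Stable σ K i j := by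
    intro j hj hr
    simp only [hA, mem_filter, mem_univ, true_and] at hj
    refine Or.inl ⟨fun hh => lt_asymm hj.2 ((hlast j hj.1).1 hh), ?_⟩
    have : #{m | LeftOf (deleteLast σ) i j m} ≤ #(Iio i ∪ {m ∈ A | f j < f m}) := by
      refine card_le_card fun m hm => ?_
      simp only [mem_filter, mem_univ, true_and] at hm
      rcases lt_trichotomy m i with hmi | rfl | hmi
      · simp [hmi]
      · simp [LeftOf, not_lt.2 hj.1.le] at hm
      · have := (hleft j m hj.1 hmi).1 hm
        simp [hA, hmi, this, hj.2.trans this]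
    have hu := card_union_le (Iio i) {m ∈ A | f j < f m}
    rw [Fin.card_Iio] at hu
    rw [leftCount_eq_card]
    omega
  have hstB : ∀ j ∈ B, #{m ∈ B | - f j < - f m} < K + 1 - i → Stable σ K i j := by
    intro j hj hr
    simp only [hB, mem_filter, mem_univ, true_and] at hj
    refine Or.inr ⟨(hlast j hj.1).2 hj.2, ?_⟩
    have : #(univ : Finset (Fin N)) ≤ #(({i, j} ∪ ({m | LeftOf (deleteLast σ) i j m} : Finset _)) ∪
        (Iio i ∪ {m ∈ B | - f j < - f m})) := by
      refine card_le_card fun m _ => ?_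
      rcases lt_trichotomy m i with hmi | rfl | hmi
      · simp [hmi]
      · simp
      · by_cases hmj : m = j
        · simp [hmj]
        · rcases lt_or_gt_of_ne (fun hh => hmj (hinj hmi hj.1 hh) : f m ≠ f j) with hlt | hlt
          · simp [hB, hmi, hlt, hlt.trans hj.2]
          · simp [(hleft j m hj.1 hmi).2 hlt]
    have h1 := card_union_le ({i, j} ∪ ({m | LeftOf (deleteLast σ) i j m} : Finset _))
      (Iio i ∪ {m ∈ B | - f j < - f m})
    have h2 := card_union_le {i, j} ({m | LeftOf (deleteLast σ) i j m} : Finset _)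
    have h3 := card_union_le (Iio i) {m ∈ B | - f j < - f m}
    have h4 := card_le_two (a := i) (b := j)
    rw [Fin.card_Iio] at h3
    rw [card_univ, Fintype.card_fin] at this
    rw [leftCount_eq_card]
    omega
  have hsub : #({j ∈ A | #{m ∈ A | f j < f m} < K + 1 - i}) +
      #({j ∈ B | #{m ∈ B | - f j < - f m} < K + 1 - i}) ≤
      #{j : Fin N | i < j ∧ Stable σ K i j} := by
    rw [← card_union_of_disjoint]
    · refine card_le_card fun j hj => ?_
      simp only [mem_union, mem_filter] at hj
      rcases hj with ⟨hj, hr⟩ | ⟨hj, hr⟩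
      · have := hstA j hj hr
        simp only [hA, mem_filter, mem_univ, true_and] at hj
        simp [hj.1, this]
      · have := hstB j hj hr
        simp only [hB, mem_filter, mem_univ, true_and] at hj
        simp [hj.1, this]
    · rw [disjoint_left]
      intro j h1 h2
      simp only [hA, hB, mem_filter, mem_univ, true_and] at h1 h2
      exact lt_asymm h1.1.2 h2.1.2
  omega

/-- Deleting the last vertex decreases the weight by at least `3 * (K + 2).choose 2`. -/
theorem Keyed.weight_deleteLast_add_le {N : ℕ}
    {σ : Fin (N + 1) → Fin (N + 1) → Fin (N + 1) → Bool} (h : Keyed σ) (K : ℕ)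
    (hK : 2 * K + 2 ≤ N) :
    weight (deleteLast σ) K + 3 * (K + 2).choose 2 ≤ weight σ (K + 1) := by
  classical
  have hlast := h.two_mul_choose_le_sum_last K hK
  have hstable : (K + 2).choose 2 ≤
      ∑ j : Fin N, ∑ i : Fin N, if i < j then (if Stable σ K i j then 1 else 0) else 0 := by
    rw [sum_comm, ← sum_range_tsub_eq_choose N (K + 1) (by omega),
      ← Fin.sum_univ_eq_sum_range fun r => K + 1 - r]
    refine sum_le_sum fun i _ => (h.le_card_stable K hK i).trans (le_of_eq ?_)
    rw [card_filter]
    exact sum_congr rfl fun j _ => by by_cases hij : i < j <;> simp [hij]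
  have hedges : weight (deleteLast σ) K +
      (∑ j : Fin N, ∑ i : Fin N, if i < j then (if Stable σ K i j then 1 else 0) else 0) ≤
      ∑ j : Fin N, ∑ i : Fin N,
        if i < j then K + 1 - edgeType σ i.castSucc j.castSucc else 0 := by
    rw [weight, ← sum_add_distrib]
    refine sum_le_sum fun j _ => ?_
    rw [← sum_add_distrib]
    refine sum_le_sum fun i _ => ?_
    by_cases hij : i < j
    · simpa only [hij, if_true] using tsub_edgeType_castSucc_ge σ K hK i j
    · simp [hij]
  have hsplit : weight σ (K + 1) =
      (∑ j : Fin N, ∑ i : Fin N,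
        if i < j then K + 1 - edgeType σ i.castSucc j.castSucc else 0) +
      ∑ i : Fin N, (K + 1 - edgeType σ i.castSucc (Fin.last N)) := by
    simp only [weight, Fin.sum_univ_castSucc, Fin.castSucc_lt_castSucc_iff, Fin.castSucc_lt_last,
      if_true, if_false, add_zero, not_lt.2 (Fin.le_last _)]
  omega

theorem Keyed.le_weight {n : ℕ} {σ : Fin n → Fin n → Fin n → Bool} (h : Keyed σ) (K : ℕ)
    (hK : 2 * K < n) : 3 * (K + 2).choose 3 ≤ weight σ K := by
  induction K generalizing n with
  | zero => simp
  | succ K ih =>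
    obtain ⟨N, rfl⟩ : ∃ N, n = N + 1 := ⟨n - 1, by omega⟩
    have h1 := ih h.keyed_deleteLast (by omega)
    have h2 := h.weight_deleteLast_add_le K (by omega)
    have h3 : (K + 3).choose 3 = (K + 2).choose 2 + (K + 2).choose 3 :=
      Nat.choose_succ_succ' (K + 2) 2
    rw [show K + 1 + 2 = K + 3 from rfl]
    omega

end Sig

namespace XMonotoneDrawing

variable {n : ℕ} {D : XMonotoneDrawing n}

theorem sig_eq_true_iff {i j k : Fin n} : D.sig i j k = true ↔ 0 < D.e i k (D.x j) := by
  simp [sig]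

theorem sig_eq_false_iff {i j k : Fin n} : D.sig i j k = false ↔ ¬ 0 < D.e i k (D.x j) := by
  simp [sig]

theorem Semisimple.ne_of_adj (hD : D.Semisimple) {i j k l : Fin n} (hij : i < j) (hkl : k < l)
    (hne : (i, j) ≠ (k, l)) (hadj : Adj i j k l) {t : ℝ} (h1 : max (D.x i) (D.x k) < t)
    (h2 : t < min (D.x j) (D.x l)) : D.e i j t ≠ D.e k l t := by
  intro h
  have hfin : (D.crossSet i j k l).Finite := D.cross_finite i j k l hij hkl hne
  have hempty := (Set.ncard_eq_zero hfin).1 (hD i j k l hij hkl hne hadj)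
  exact Set.notMem_empty t (hempty ▸ ⟨h1, h2, h⟩)

/-- Near the common left endpoint `i`, edges to `j < m` are ordered as the signature says. -/
theorem Semisimple.lt_iff_of_left (hD : D.Semisimple) {i j m : Fin n} (hij : i < j) (hjm : j < m)
    {t : ℝ} (h1 : D.x i < t) (h2 : t < D.x j) :
    D.e i j t < D.e i m t ↔ 0 < D.e i m (D.x j) := by
  have hxjm := D.x_strictMono hjm
  have hsub : Set.Icc t (D.x j) ⊆ Set.Icc (D.x i) (D.x j) := Set.Icc_subset_Icc_left h1.le
  have key := pos_left_iff_pos_right_of_ne_zero (d := fun s => D.e i m s - D.e i j s) h2.le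
    (((D.cont i m (hij.trans hjm)).mono (hsub.trans (Set.Icc_subset_Icc_right hxjm.le))).sub
      ((D.cont i j hij).mono hsub)) ?_
  · simpa [D.end_right i j hij] using key
  · rintro s ⟨hs1, hs2⟩
    rcases hs2.lt_or_eq with hs | rfl
    · exact sub_ne_zero.2 (hD.ne_of_adj (hij.trans hjm) hij (by simp [hjm.ne']) (Or.inl rfl)
        (by simpa using h1.trans_le hs1) (lt_min (hs.trans hxjm) hs))
    · simpa [D.end_right i j hij] using D.avoid_vertex i j m hij hjm

/-- Near the common right endpoint `j`, edges from `m < i` are ordered as the signature says. -/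
theorem Semisimple.lt_iff_of_right (hD : D.Semisimple) {m i j : Fin n} (hmi : m < i) (hij : i < j)
    {t : ℝ} (h1 : D.x i < t) (h2 : t < D.x j) :
    D.e i j t < D.e m j t ↔ 0 < D.e m j (D.x i) := by
  have hxmi := D.x_strictMono hmi
  have hsub : Set.Icc (D.x i) t ⊆ Set.Icc (D.x i) (D.x j) := Set.Icc_subset_Icc_right h2.le
  have key := pos_left_iff_pos_right_of_ne_zero (d := fun s => D.e m j s - D.e i j s) h1.le
    (((D.cont m j (hmi.trans hij)).mono (hsub.trans (Set.Icc_subset_Icc_left hxmi.le))).sub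
      ((D.cont i j hij).mono hsub)) ?_
  · simpa [D.end_left i j hij] using key.symm
  · rintro s ⟨hs1, hs2⟩
    rcases hs1.lt_or_eq with hs | rfl
    · exact sub_ne_zero.2 (hD.ne_of_adj (hmi.trans hij) hij (by simp [hmi.ne])
        (Or.inr (Or.inr (Or.inr rfl))) (max_lt (hxmi.trans hs) hs)
        (by simpa using hs2.trans_lt h2))
    · simpa [D.end_left i j hij] using D.avoid_vertex m i j hmi hij

theorem exists_between_right (D : XMonotoneDrawing n) (i : Fin n) :
    ∃ t, D.x i < t ∧ ∀ j, i < j → t < D.x j := by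
  have h : ∀ᶠ t in nhdsWithin (D.x i) (Set.Ioi (D.x i)), ∀ j, i < j → t < D.x j :=
    Filter.eventually_all.2 fun j => by
      by_cases hj : i < j
      · filter_upwards [nhdsWithin_le_nhds (Iio_mem_nhds (D.x_strictMono hj))] with t ht _ using ht
      · simp [hj]
  obtain ⟨t, ht, h⟩ := (h.and self_mem_nhdsWithin).exists
  exact ⟨t, h, ht⟩

theorem exists_between_left (D : XMonotoneDrawing n) (j : Fin n) :
    ∃ t, t < D.x j ∧ ∀ i, i < j → D.x i < t := by
  have h : ∀ᶠ t in nhdsWithin (D.x j) (Set.Iio (D.x j)), ∀ i, i < j → D.x i < t :=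
    Filter.eventually_all.2 fun i => by
      by_cases hi : i < j
      · filter_upwards [nhdsWithin_le_nhds (Ioi_mem_nhds (D.x_strictMono hi))] with t ht _ using ht
      · simp [hi]
  obtain ⟨t, ht, h⟩ := (h.and self_mem_nhdsWithin).exists
  exact ⟨t, h, ht⟩

theorem Semisimple.keyed_sig (hD : D.Semisimple) : Sig.Keyed D.sig := by
  constructor
  · intro i
    obtain ⟨t, ht, htj⟩ := D.exists_between_right i
    have hinj : Set.InjOn (fun j => D.e i j t) (Set.Ioi i) := by
      intro a ha b hb hab
      by_contra hne
      exact hD.ne_of_adj ha hb (by simp [hne]) (Or.inl rfl) (by simpa using ht)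
        (lt_min (htj a ha) (htj b hb)) hab
    refine ⟨fun j => D.e i j t, hinj, fun j m hj hm => ?_⟩
    rcases lt_trichotomy j m with hjm | rfl | hmj
    · simp [Sig.LeftOf, hjm, hjm.not_gt, hm.not_gt, sig_eq_true_iff,
        hD.lt_iff_of_left hj hjm ht (htj j hj)]
    · simp [Sig.LeftOf, hj.not_gt]
    · have hne : D.e i m t ≠ D.e i j t := fun h => hmj.ne (hinj hm hj h)
      simp only [Sig.LeftOf, hm, hmj, hmj.not_gt, hm.not_gt, sig_eq_false_iff, true_and, false_and,
        or_false, ← hD.lt_iff_of_left hm hmj ht (htj m hm), not_lt]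
      exact ⟨fun h => lt_of_le_of_ne h hne.symm, le_of_lt⟩
  · intro j
    obtain ⟨t, ht, hti⟩ := D.exists_between_left j
    have hinj : Set.InjOn (fun i => D.e i j t) (Set.Iio j) := by
      intro a ha b hb hab
      by_contra hne
      exact hD.ne_of_adj ha hb (by simp [hne]) (Or.inr (Or.inr (Or.inr rfl)))
        (max_lt (hti a ha) (hti b hb)) (by simpa using ht) hab
    refine ⟨fun i => D.e i j t, hinj, fun i m hi hm => ?_⟩
    rcases lt_trichotomy m i with hmi | rfl | him
    · simp [Sig.LeftOf, hmi, hmi.not_gt, hm.not_gt, sig_eq_true_iff,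
        hD.lt_iff_of_right hmi hi (hti i hi) ht]
    · simp [Sig.LeftOf, hi.not_gt]
    · have hne : D.e m j t ≠ D.e i j t := fun h => him.ne' (hinj hm hi h)
      simp only [Sig.LeftOf, hm, him, him.not_gt, hm.not_gt, sig_eq_false_iff, true_and, false_and,
        or_false, ← hD.lt_iff_of_right him hm (hti m hm) ht, not_lt]
      exact ⟨fun h => lt_of_le_of_ne h hne.symm, le_of_lt⟩

end XMonotoneDrawing

/-- Let `n ≥ 3` and let `D` be a semisimple x-monotone drawing of `K n`.
For every integer `k` with `0 ≤ k < n/2 − 1` (i.e. `2k + 2 < n`),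
`E_{≤≤k}(D) ≥ 3·C(k+3, 3)`. -/
theorem semisimple_monotone_Elele_lower_bound (n : ℕ) (hn : 3 ≤ n)
    (D : XMonotoneDrawing n) (hD : D.Semisimple) (k : ℕ) (hk : 2 * k + 2 < n) :
    3 * (k + 3).choose 3 ≤ Sig.Elele D.sig k := by
  rw [Sig.Elele_eq_weight]
  exact hD.keyed_sig.le_weight (k + 1) (by omega)
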